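/- Let S and S' be two seed trees of the same size k ≥ 3. Then for every decorated tree τ = (τ, ℓ) and every n ≥ k: E[F_τ(T_n^S)] − E[F_τ(T_n^{S'})] = E[F_τ(T_n^S, {·} ∩ S ≠ ∅)] − E[F_τ(T_n^{S'}, {·} ∩ S' ≠ ∅)], where F_τ(T_n^S, {·} ∩ S ≠ ∅) is the contribution to F_τ(T_n^S) of those embeddings whose image contains at least one vertex of the seed S. -/

import Mathlib

/-!
The vertices of `T_n^S` outside the seed, with the edges between them and their degrees in the
whole tree, form a labelled forest (`forget`). A new vertex attaches to a forest vertex with a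
probability depending only on the label of that vertex and on `n`, hence it attaches to the seed
with the complementary probability, because the degrees of a tree on `n` vertices sum to
`2 (n - 1)`. Which seed vertex is chosen has no effect on the forest. The labelled forest is
therefore a Markov chain whose transitions depend on the seed only through its size
(`sum_step_forget`), and its law is the same for `S` and `S'` (`map_forget_paLaw_eq`).

The embeddings that avoid the seed are the embeddings into the forest, and their weights are
functions of the labels, so that `F_τ(T_n^S)` minus the contribution of the embeddings meeting the
seed is a function of the labelled forest (`obsG_eq_obsMeetSeed_add_obsForest`). Its expectation is
thus the same for both seeds.
-/


open MeasureTheory Filter Asymptotics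

noncomputable section

namespace AffinePA

instance (V : Type*) : MeasurableSpace (SimpleGraph V) := ⊤

/-- The degree of a vertex. -/
def degR {V : Type*} (G : SimpleGraph V) (v : V) : ℕ := Nat.card {w // G.Adj v w}

/-- The tree on `n+1` vertices obtained from `G` by attaching the new vertex to `u`. -/
def extendTree {n : ℕ} (G : SimpleGraph (Fin n)) (u : Fin n) : SimpleGraph (Fin (n + 1)) :=
  SimpleGraph.fromRel fun a b =>
    (∃ a' b' : Fin n, a = Fin.castSucc a' ∧ b = Fin.castSucc b' ∧ G.Adj a' b') ∨
      (a = Fin.castSucc u ∧ b = Fin.last n)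

/-- One step of the affine preferential attachment dynamics. -/
def stepMeasure (α : ℝ) {n : ℕ} (G : SimpleGraph (Fin n)) :
    Measure (SimpleGraph (Fin (n + 1))) :=
  ∑ u : Fin n,
    ENNReal.ofReal (((degR G u : ℝ) - 1 + α) / ((1 + α) * (n : ℝ) - 2)) •
      Measure.dirac (extendTree G u)

/-- The law of the α-PA tree with `m` added vertices, started from the seed `S`. -/
def paLaw (α : ℝ) {k : ℕ} (S : SimpleGraph (Fin k)) :
    (m : ℕ) → Measure (SimpleGraph (Fin (k + m)))
  | 0 => Measure.dirac S
  | m + 1 => (paLaw α S m).bind (stepMeasure α)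

/-- The weight `∏_u [deg_T(f u) - 1]_{ℓ u}` of a map `f`. -/
def embWeight {V W : Type*} [Fintype V] (T : SimpleGraph W) (ℓ : V → ℕ) (f : V → W) : ℝ :=
  ∏ u : V, ((degR T (f u) - 1).descFactorial (ℓ u) : ℝ)

/-- The observable `F_{(τ,ℓ)}(T)`. -/
def obsG {V W : Type*} [Fintype V] (τ : SimpleGraph V) (ℓ : V → ℕ) (T : SimpleGraph W) : ℝ :=
  ∑ᶠ φ : τ ↪g T, embWeight T ℓ ⇑φ

/-- The weight `w(τ,ℓ)` of a decorated tree. -/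
def weightG {V : Type*} [Fintype V] (τ : SimpleGraph V) (ℓ : V → ℕ) : ℕ :=
  if Fintype.card V ≤ 2 ∧ ∀ v, ℓ v = 0 then 1
  else (∑ v, ℓ v) + Nat.card {v // degR τ v = 1 ∧ ℓ v = 0}

/-- A decorated tree: a finite graph on `Fin n` with nonnegative integer decorations. -/
structure DecTree where
  n : ℕ
  tree : SimpleGraph (Fin n)
  dec : Fin n → ℕ

def DecTree.wt (τ : DecTree) : ℕ := weightG τ.tree τ.dec

def DecTree.decSum (τ : DecTree) : ℕ := ∑ v, τ.dec v

def DecTree.obs (τ : DecTree) {W : Type*} (T : SimpleGraph W) : ℝ := obsG τ.tree τ.dec T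

/-- The strict partial order `≺` on decorated trees. -/
def DecLt (σ τ : DecTree) : Prop :=
  (σ.wt < τ.wt ∧ σ.n ≤ τ.n) ∨ (σ.wt = τ.wt ∧ σ.n < τ.n) ∨
    (σ.wt = τ.wt ∧ σ.n = τ.n ∧ σ.decSum < τ.decSum)

open Classical in
/-- `F_{τ+τ}(T)`: sum over pairs of embeddings with overlapping images. -/
def obsOverlapG {V W : Type*} [Fintype V] (τ : SimpleGraph V) (ℓ : V → ℕ)
    (T : SimpleGraph W) : ℝ :=
  ∑ᶠ (φ₁ : τ ↪g T) (φ₂ : τ ↪g T),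
    if (Set.range ⇑φ₁ ∩ Set.range ⇑φ₂).Nonempty then
      embWeight T ℓ ⇑φ₁ * embWeight T ℓ ⇑φ₂
    else 0

open Classical in
/-- `F_{τ,σ}(T)`: sum over pairs of embeddings with disjoint images. -/
def obsDisjG {V₁ V₂ W : Type*} [Fintype V₁] [Fintype V₂] (τ : SimpleGraph V₁) (ℓτ : V₁ → ℕ)
    (σ : SimpleGraph V₂) (ℓσ : V₂ → ℕ) (T : SimpleGraph W) : ℝ :=
  ∑ᶠ (φ₁ : τ ↪g T) (φ₂ : σ ↪g T),
    if Disjoint (Set.range ⇑φ₁) (Set.range ⇑φ₂) then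
      embWeight T ℓτ ⇑φ₁ * embWeight T ℓσ ⇑φ₂
    else 0

/-- `f ≈ g` : same order of magnitude, eventually. -/
def asympEquiv (f g : ℕ → ℝ) : Prop :=
  ∃ C : ℝ, 0 < C ∧ ∀ᶠ n in atTop, f n ≤ C * g n ∧ g n ≤ C * f n

/-- Descending factorial `[x]_l` of a real number. -/
def descPoch (x : ℝ) (l : ℕ) : ℝ := ∏ i ∈ Finset.range l, (x - (i : ℝ))

/-- Total variation distance between two measures. -/
def tvDist {X : Type*} [MeasurableSpace X] (μ ν : Measure X) : ℝ :=
  ⨆ s : {s : Set X // MeasurableSet s}, |(μ ↑s).toReal - (ν ↑s).toReal|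

open Classical in
/-- The contribution to `F_τ` of embeddings whose image meets the seed. -/
def obsMeetSeed (k m : ℕ) {r : ℕ} (τ : SimpleGraph (Fin r)) (ℓ : Fin r → ℕ)
    (T : SimpleGraph (Fin (k + m))) : ℝ :=
  ∑ᶠ φ : τ ↪g T,
    if ∃ (x : Fin r) (y : Fin k), φ x = Fin.castAdd m y then embWeight T ℓ ⇑φ else 0

/-- The contribution to `F_τ` of embeddings contained in the seed. -/
def obsInSeed (k m : ℕ) {r : ℕ} (τ : SimpleGraph (Fin r)) (ℓ : Fin r → ℕ)
    (S : SimpleGraph (Fin k)) (T : SimpleGraph (Fin (k + m))) : ℝ :=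
  ∑ᶠ φ : τ ↪g S, embWeight T ℓ fun u => Fin.castAdd m (φ u)

/-- `D_{τ,d}(T)`: the number of perfect embeddings of `(τ,d)` in `T`. -/
def perfCount {V W : Type*} (τ : SimpleGraph V) (d : V → ℕ) (T : SimpleGraph W) : ℕ :=
  Nat.card {φ : τ ↪g T // ∀ u, degR T (φ u) = d u}

/-- `τ` is `(T₁,T₂)`-blind. -/
def IsBlind {V W₁ W₂ : Type*} (τ : SimpleGraph V) (T₁ : SimpleGraph W₁)
    (T₂ : SimpleGraph W₂) : Prop :=
  ∀ d : V → ℕ, (∀ u, 1 ≤ d u) → perfCount τ d T₁ = perfCount τ d T₂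

/-- `D_{σ,τ,d}(T)`: perfect embeddings of `(τ,d)` meeting the seed exactly in `φ(A)`. -/
def perfCountSeed (k m : ℕ) {r : ℕ} (τ : SimpleGraph (Fin r)) (A : Finset (Fin r))
    (d : Fin r → ℕ) (T : SimpleGraph (Fin (k + m))) : ℕ :=
  Nat.card {φ : τ ↪g T //
    (∀ u, degR T (φ u) = d u) ∧ ∀ u : Fin r, (∃ y : Fin k, φ u = Fin.castAdd m y) ↔ u ∈ A}

/-- The σ-algebra generated by `T_0, …, T_m`. -/
def natFilt {Ω : Type*} [MeasurableSpace Ω] {k : ℕ}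
    (T : (m : ℕ) → Ω → SimpleGraph (Fin (k + m))) (m : ℕ) : MeasurableSpace Ω :=
  ⨆ j ∈ Set.Iic m, MeasurableSpace.comap (T j) inferInstance

/-- `(T_m)` is an α-PA chain started from the seed `S`, on the probability space `(Ω,P)`. -/
structure IsPAChain (α : ℝ) {k : ℕ} (S : SimpleGraph (Fin k)) {Ω : Type*} [MeasurableSpace Ω]
    (P : Measure Ω) (T : (m : ℕ) → Ω → SimpleGraph (Fin (k + m))) : Prop where
  isProb : IsProbabilityMeasure P
  meas : ∀ m, Measurable (T m)
  init : ∀ᵐ ω ∂P, T 0 ω = S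
  step : ∀ (m : ℕ) (f : SimpleGraph (Fin (k + (m + 1))) → ℝ),
    P[(fun ω => f (T (m + 1) ω))|natFilt T m] =ᵐ[P]
      fun ω => ∫ G, f G ∂stepMeasure α (T m ω)

/-- The natural filtration of the chain. -/
def natFiltration {Ω : Type*} [mΩ : MeasurableSpace Ω] {k : ℕ}
    (T : (m : ℕ) → Ω → SimpleGraph (Fin (k + m))) (hT : ∀ m, Measurable (T m)) :
    Filtration ℕ mΩ where
  seq := natFilt T
  mono' _ _ hij := biSup_mono fun _ hx => le_trans hx hij
  le' _ := iSup_le fun l => iSup_le fun _ => (hT l).comap_le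

/-- Isomorphism of simple graphs as a setoid. -/
def isoSetoid (n : ℕ) : Setoid (SimpleGraph (Fin n)) where
  r G H := Nonempty (G ≃g H)
  iseqv := ⟨fun G => ⟨RelIso.refl G.Adj⟩, fun ⟨e⟩ => ⟨e.symm⟩, fun ⟨e⟩ ⟨f⟩ => ⟨e.trans f⟩⟩

/-- Isomorphism classes of graphs on `n` vertices. -/
def IsoClass (n : ℕ) : Type := Quotient (isoSetoid n)

instance (n : ℕ) : MeasurableSpace (IsoClass n) := ⊤

/-- The law of the isomorphism class of the α-PA tree with `n` vertices grown from `S`. -/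
def isoClassLaw (α : ℝ) {k : ℕ} (S : SimpleGraph (Fin k)) (n : ℕ) : Measure (IsoClass n) :=
  if h : k ≤ n then
    (paLaw α S (n - k)).map fun G =>
      Quotient.mk (isoSetoid n) (G.map (finCongr (Nat.add_sub_cancel' h)).toEmbedding)
  else 0


/-! ### Degrees under attachment of a vertex -/

section Attachment

variable {n : ℕ} (G : SimpleGraph (Fin n)) (u : Fin n)

lemma extendTree_adj_castSucc (a b : Fin n) :
    (extendTree G u).Adj a.castSucc b.castSucc ↔ G.Adj a b := by
  simp only [extendTree, SimpleGraph.fromRel_adj, Fin.castSucc_inj, Fin.castSucc_ne_last, ne_eq,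
    and_false, or_false]
  constructor
  · rintro ⟨-, ⟨a', b', rfl, rfl, h⟩ | ⟨a', b', rfl, rfl, h⟩⟩
    exacts [h, h.symm]
  · exact fun h => ⟨h.ne, Or.inl ⟨a, b, rfl, rfl, h⟩⟩

lemma extendTree_adj_last (a : Fin n) :
    (extendTree G u).Adj a.castSucc (Fin.last n) ↔ a = u := by
  simp [extendTree, SimpleGraph.fromRel_adj, Fin.castSucc_ne_last, (Fin.castSucc_ne_last _).symm]

open Classical in
lemma degR_eq_sum {W : Type*} [Fintype W] (H : SimpleGraph W) (v : W) :
    degR H v = ∑ w, if H.Adj v w then 1 else 0 := by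
  rw [degR, Nat.card_eq_fintype_card, Fintype.card_subtype, Finset.card_filter]

open Classical in
lemma degR_extendTree_castSucc (v : Fin n) :
    degR (extendTree G u) v.castSucc = degR G v + if v = u then 1 else 0 := by
  rw [degR_eq_sum, degR_eq_sum, Fin.sum_univ_castSucc]
  simp only [extendTree_adj_castSucc, extendTree_adj_last]

lemma degR_extendTree_last : degR (extendTree G u) (Fin.last n) = 1 := by
  classical
  rw [degR_eq_sum, Fin.sum_univ_castSucc]
  simp only [SimpleGraph.adj_comm _ (Fin.last n), extendTree_adj_last]
  simp

/-- The numerical properties of a tree on `n ≥ 2` vertices used below: every degree is positive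
and the degrees sum to `2 (n - 1)`. -/
def DegreesOfTree : Prop :=
  (∀ v, 1 ≤ degR G v) ∧ ∑ v, degR G v + 2 = 2 * n

variable {G}

lemma DegreesOfTree.extendTree (h : DegreesOfTree G) : DegreesOfTree (extendTree G u) := by
  refine ⟨fun v => ?_, ?_⟩
  · induction v using Fin.lastCases with
    | last => rw [degR_extendTree_last]
    | cast v => rw [degR_extendTree_castSucc]; exact (h.1 v).trans (Nat.le_add_right _ _)
  · have h2 := h.2
    rw [Fin.sum_univ_castSucc, degR_extendTree_last]
    simp only [degR_extendTree_castSucc, Finset.sum_add_distrib, Finset.sum_ite_eq',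
      Finset.mem_univ, if_true]
    omega

lemma degreesOfTree_of_isTree (hn : 3 ≤ n) (h : G.IsTree) : DegreesOfTree G := by
  classical
  have hdeg : ∀ v, degR G v = G.degree v := fun v => by
    rw [degR, Nat.card_eq_fintype_card, ← SimpleGraph.card_neighborSet_eq_degree]
    rfl
  have : Nontrivial (Fin n) := Fin.nontrivial_iff_two_le.2 (by omega)
  refine ⟨fun v => ?_, ?_⟩
  · rw [hdeg]
    exact h.connected.preconnected.degree_pos_of_nontrivial v
  · have h1 := h.card_edgeFinset
    have h2 := G.sum_degrees_eq_twice_card_edges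
    simp only [Fintype.card_fin] at h1
    simp only [hdeg]
    omega

end Attachment

/-! ### The attachment probabilities -/

/-- The probability that a given vertex of degree `d` receives the vertex attached to a tree on
`n` vertices. -/
def attachProb (α : ℝ) (n d : ℕ) : ℝ := ((d : ℝ) - 1 + α) / ((1 + α) * (n : ℝ) - 2)

lemma attachProb_nonneg {α : ℝ} (hα : 0 < α) {n d : ℕ} (hn : 3 ≤ n) (hd : 1 ≤ d) :
    0 ≤ attachProb α n d := by
  have hn' : (3 : ℝ) ≤ n := by exact_mod_cast hn
  have hd' : (1 : ℝ) ≤ d := by exact_mod_cast hd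
  exact div_nonneg (by linarith) (by nlinarith)

lemma sum_attachProb {α : ℝ} (hα : 0 < α) {n : ℕ} (hn : 3 ≤ n) {G : SimpleGraph (Fin n)}
    (hG : DegreesOfTree G) : ∑ u, attachProb α n (degR G u) = 1 := by
  have hn' : (3 : ℝ) ≤ n := by exact_mod_cast hn
  have hz : (1 + α) * (n : ℝ) - 2 ≠ 0 := by nlinarith
  have h2 : (∑ u, (degR G u : ℝ)) + 2 = 2 * n := by exact_mod_cast hG.2
  simp only [attachProb]
  rw [← Finset.sum_div, div_eq_one_iff_eq hz, Finset.sum_add_distrib, Finset.sum_sub_distrib]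
  simp only [Finset.sum_const, Finset.card_univ, Fintype.card_fin, nsmul_eq_mul, mul_one]
  linarith

/-! ### One-step recursion for the law of the tree -/

lemma lintegral_paLaw_succ (α : ℝ) {k : ℕ} (S : SimpleGraph (Fin k)) (m : ℕ)
    (g : SimpleGraph (Fin (k + m + 1)) → ENNReal) :
    ∫⁻ G, g G ∂paLaw α S (m + 1) =
      ∫⁻ G, ∑ u, ENNReal.ofReal (attachProb α (k + m) (degR G u)) * g (extendTree G u)
        ∂paLaw α S m := by
  rw [paLaw]
  refine (Measure.lintegral_bind Measurable.of_discrete.aemeasurable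
    Measurable.of_discrete.aemeasurable).trans ?_
  refine lintegral_congr fun G => ?_
  simp only [stepMeasure, lintegral_finsetSum_measure, lintegral_smul_measure, lintegral_dirac,
    smul_eq_mul, attachProb]

lemma ae_degreesOfTree (α : ℝ) {k : ℕ} {S : SimpleGraph (Fin k)}
    (hS : DegreesOfTree S) (m : ℕ) : ∀ᵐ G ∂paLaw α S m, DegreesOfTree G := by
  induction m with
  | zero =>
    rw [paLaw, ae_dirac_iff MeasurableSet.of_discrete]
    exact hS
  | succ m ih =>
    have key : ∫⁻ G, {G : SimpleGraph (Fin (k + m + 1)) | ¬ DegreesOfTree G}.indicator 1 G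
        ∂paLaw α S (m + 1) = 0 := by
      rw [lintegral_paLaw_succ, lintegral_eq_zero_iff Measurable.of_discrete]
      filter_upwards [ih] with G hG
      refine Finset.sum_eq_zero fun u _ => ?_
      simp [hG.extendTree u]
    rw [ae_iff]
    rwa [lintegral_indicator_one MeasurableSet.of_discrete] at key

lemma isProbabilityMeasure_paLaw {α : ℝ} (hα : 0 < α) {k : ℕ} (hk : 3 ≤ k)
    {S : SimpleGraph (Fin k)} (hS : DegreesOfTree S) (m : ℕ) :
    IsProbabilityMeasure (paLaw α S m) := by
  induction m with
  | zero => rw [paLaw]; infer_instance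
  | succ m ih =>
    have key := lintegral_paLaw_succ α S m 1
    refine ⟨?_⟩
    simp only [Pi.one_apply, lintegral_one, mul_one] at key
    refine key.trans ?_
    have : ∀ᵐ G ∂paLaw α S m,
        ∑ u, ENNReal.ofReal (attachProb α (k + m) (degR G u)) = 1 := by
      filter_upwards [ae_degreesOfTree α hS m] with G hG
      rw [← ENNReal.ofReal_sum_of_nonneg
        fun u _ => attachProb_nonneg hα (by omega) (hG.1 u),
        sum_attachProb hα (by omega) hG, ENNReal.ofReal_one]
    rw [lintegral_congr_ae this]
    simp

/-! ### The planted forest of the non-seed vertices -/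

/-- What remains of the tree when the seed is forgotten: the forest induced on the `m` vertices
added after the seed, each of them labelled with its degree in the whole tree. -/
abbrev Forest (m : ℕ) : Type := SimpleGraph (Fin m) × (Fin m → ℕ)

/-- The labelled forest induced on the non-seed vertices of `G`. -/
def forget (k m : ℕ) (G : SimpleGraph (Fin (k + m))) : Forest m :=
  (G.comap (Fin.natAdd k), fun v => degR G (Fin.natAdd k v))

open Classical in
/-- The labelled forest after the attachment of a new vertex, to the forest vertex `v` for
`some v`, or to an unspecified seed vertex for `none`. In both cases the new vertex has degree `1`
in the whole tree. -/
def Forest.attach {m : ℕ} (X : Forest m) : Option (Fin m) → Forest (m + 1)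
  | some v => (extendTree X.1 v, Fin.snoc (fun w => X.2 w + if w = v then 1 else 0) 1)
  | none => (X.1.map Fin.castSucc, Fin.snoc X.2 1)

lemma forget_extendTree_natAdd (k m : ℕ) (G : SimpleGraph (Fin (k + m))) (v : Fin m) :
    forget k (m + 1) (extendTree G (Fin.natAdd k v)) = (forget k m G).attach (some v) := by
  refine Prod.ext ?_ ?_
  · ext a b
    simp only [forget, Forest.attach, SimpleGraph.comap_adj]
    induction a using Fin.lastCases with
    | last =>
      induction b using Fin.lastCases with
      | last => simp
      | cast b =>
        rw [SimpleGraph.adj_comm, SimpleGraph.adj_comm _ (Fin.last m), extendTree_adj_last]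
        exact (extendTree_adj_last G (Fin.natAdd k v) (Fin.natAdd k b)).trans (Fin.natAdd_inj k)
    | cast a =>
      induction b using Fin.lastCases with
      | last =>
        rw [extendTree_adj_last]
        exact (extendTree_adj_last G (Fin.natAdd k v) (Fin.natAdd k a)).trans (Fin.natAdd_inj k)
      | cast b =>
        rw [extendTree_adj_castSucc, Fin.natAdd_castSucc, Fin.natAdd_castSucc,
          extendTree_adj_castSucc, SimpleGraph.comap_adj]
  · ext a
    simp only [forget, Forest.attach]
    induction a using Fin.lastCases with
    | last =>
      rw [Fin.snoc_last]
      exact degR_extendTree_last G (Fin.natAdd k v)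
    | cast a =>
      rw [Fin.snoc_castSucc]
      refine (degR_extendTree_castSucc G (Fin.natAdd k v) (Fin.natAdd k a)).trans ?_
      simp only [Fin.natAdd_inj]

lemma forget_extendTree_castAdd (k m : ℕ) (G : SimpleGraph (Fin (k + m))) (u : Fin k) :
    forget k (m + 1) (extendTree G (Fin.castAdd m u)) = (forget k m G).attach none := by
  have hne : ∀ a : Fin m, Fin.natAdd k a ≠ Fin.castAdd m u := fun a h => by
    have := congrArg Fin.val h
    simp only [Fin.val_natAdd, Fin.val_castAdd] at this
    omega
  refine Prod.ext ?_ ?_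
  · ext a b
    simp only [forget, Forest.attach, SimpleGraph.comap_adj]
    induction a using Fin.lastCases with
    | last =>
      induction b using Fin.lastCases with
      | last => simp
      | cast b =>
        rw [SimpleGraph.adj_comm]
        refine (extendTree_adj_last G (Fin.castAdd m u) (Fin.natAdd k b)).trans ?_
        simp [hne, SimpleGraph.map_adj']
    | cast a =>
      induction b using Fin.lastCases with
      | last =>
        refine (extendTree_adj_last G (Fin.castAdd m u) (Fin.natAdd k a)).trans ?_
        simp [hne, SimpleGraph.map_adj']
      | cast b =>
        rw [Fin.natAdd_castSucc, Fin.natAdd_castSucc, extendTree_adj_castSucc]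
        exact (SimpleGraph.map_adj_apply (G := G.comap (Fin.natAdd k))
          (f := ⟨Fin.castSucc, Fin.castSucc_injective m⟩)).symm
  · ext a
    simp only [forget, Forest.attach]
    induction a using Fin.lastCases with
    | last =>
      rw [Fin.snoc_last]
      exact degR_extendTree_last G (Fin.castAdd m u)
    | cast a =>
      rw [Fin.snoc_castSucc]
      refine (degR_extendTree_castSucc G (Fin.castAdd m u) (Fin.natAdd k a)).trans ?_
      rw [if_neg (hne a), add_zero]

/-- The transition operator of the labelled forest. The probability of attaching to the seed is
the complement of the probabilities of attaching to the forest vertices, so it does not refer to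
the seed. -/
def forestStep (α : ℝ) (k m : ℕ) (f : Forest (m + 1) → ENNReal) (X : Forest m) : ENNReal :=
  ENNReal.ofReal (1 - ∑ v, attachProb α (k + m) (X.2 v)) * f (X.attach none) +
    ∑ v, ENNReal.ofReal (attachProb α (k + m) (X.2 v)) * f (X.attach (some v))

/-- The labelled forest is a Markov chain whose transitions depend on the seed only through its
size. -/
lemma sum_step_forget {α : ℝ} (hα : 0 < α) {k m : ℕ} (hk : 3 ≤ k)
    {G : SimpleGraph (Fin (k + m))} (hG : DegreesOfTree G) (f : Forest (m + 1) → ENNReal) :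
    ∑ u, ENNReal.ofReal (attachProb α (k + m) (degR G u)) *
        f (forget k (m + 1) (extendTree G u)) =
      forestStep α k m f (forget k m G) := by
  rw [Fin.sum_univ_add]
  simp only [forget_extendTree_castAdd, forget_extendTree_natAdd]
  rw [← Finset.sum_mul, ← ENNReal.ofReal_sum_of_nonneg
    fun u _ => attachProb_nonneg hα (by omega) (hG.1 _)]
  have h := sum_attachProb hα (by omega) hG
  rw [Fin.sum_univ_add] at h
  rw [eq_sub_of_add_eq h]
  rfl

lemma lintegral_forget_eq {α : ℝ} (hα : 0 < α) {k : ℕ} (hk : 3 ≤ k)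
    {S S' : SimpleGraph (Fin k)} (hS : DegreesOfTree S) (hS' : DegreesOfTree S') (m : ℕ)
    (f : Forest m → ENNReal) :
    ∫⁻ G, f (forget k m G) ∂paLaw α S m = ∫⁻ G, f (forget k m G) ∂paLaw α S' m := by
  induction m with
  | zero =>
    simp only [paLaw, lintegral_dirac]
    congr 1
    exact Prod.ext (Subsingleton.elim _ _) (Subsingleton.elim _ _)
  | succ m ih =>
    have key : ∀ {R : SimpleGraph (Fin k)}, DegreesOfTree R →
        ∫⁻ G, f (forget k (m + 1) G) ∂paLaw α R (m + 1) =
          ∫⁻ G, forestStep α k m f (forget k m G) ∂paLaw α R m := fun {R} hR => by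
      refine (lintegral_paLaw_succ α R m fun G => f (forget k (m + 1) G)).trans ?_
      refine lintegral_congr_ae ?_
      filter_upwards [ae_degreesOfTree α hR m] with G hG
      exact sum_step_forget hα hk hG f
    rw [key hS, key hS', ih]

/-- The labelled forest has the same law for any two seeds of the same size. -/
lemma map_forget_paLaw_eq {α : ℝ} (hα : 0 < α) {k : ℕ} (hk : 3 ≤ k)
    {S S' : SimpleGraph (Fin k)} (hS : DegreesOfTree S) (hS' : DegreesOfTree S') (m : ℕ) :
    (paLaw α S m).map (forget k m) = (paLaw α S' m).map (forget k m) := by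
  refine Measure.ext_of_lintegral _ fun f hf => ?_
  rw [lintegral_map hf Measurable.of_discrete, lintegral_map hf Measurable.of_discrete]
  exact lintegral_forget_eq hα hk hS hS' m f

/-! ### Embeddings avoiding the seed -/

/-- The observable of a labelled forest: the sum over embeddings of the weight computed from the
labels. -/
def obsForest {m r : ℕ} (τ : SimpleGraph (Fin r)) (ℓ : Fin r → ℕ) (X : Forest m) : ℝ :=
  ∑ᶠ φ : τ ↪g X.1, ∏ u, ((X.2 (φ u) - 1).descFactorial (ℓ u) : ℝ)

/-- Embeddings avoiding the seed are exactly the embeddings into the forest. -/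
lemma obsG_eq_obsMeetSeed_add_obsForest {k m r : ℕ} (τ : SimpleGraph (Fin r)) (ℓ : Fin r → ℕ)
    (G : SimpleGraph (Fin (k + m))) :
    obsG τ ℓ G = obsMeetSeed k m τ ℓ G + obsForest τ ℓ (forget k m G) := by
  classical
  have : Finite (τ ↪g G) := Finite.of_injective (fun φ => ⇑φ) DFunLike.coe_injective
  let ι : (forget k m G).1 ↪g G := SimpleGraph.Embedding.comap (Fin.natAddEmb k) G
  let j : (τ ↪g (forget k m G).1) → (τ ↪g G) := fun ψ => ι.comp ψ
  have hj : Function.Injective j := fun ψ₁ ψ₂ h => by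
    ext x
    exact congrArg Fin.val (ι.injective (DFunLike.congr_fun h x))
  have hrange : ∀ φ : τ ↪g G, φ ∈ Set.range j ↔
      ¬ ∃ (x : Fin r) (y : Fin k), φ x = Fin.castAdd m y := by
    intro φ
    constructor
    · rintro ⟨ψ, rfl⟩ ⟨x, y, h⟩
      have := congrArg Fin.val h
      change k + (ψ x : ℕ) = y at this
      omega
    · intro h
      have hx : ∀ x, ∃ v : Fin m, Fin.natAdd k v = φ x := fun x => by
        generalize hφ : φ x = w
        induction w using Fin.addCases with
        | left y => exact absurd ⟨x, y, hφ⟩ h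
        | right v => exact ⟨v, rfl⟩
      choose g hg using hx
      refine ⟨⟨⟨g, fun x y hxy => φ.injective (by rw [← hg, ← hg, hxy])⟩, fun {x y} => ?_⟩, ?_⟩
      · change G.Adj (Fin.natAdd k (g x)) (Fin.natAdd k (g y)) ↔ _
        rw [hg, hg, φ.map_adj_iff]
      · ext x
        exact congrArg Fin.val (hg x)
  have hforest : obsForest τ ℓ (forget k m G) =
      ∑ᶠ φ : τ ↪g G, if ∃ (x : Fin r) (y : Fin k), φ x = Fin.castAdd m y then 0
        else embWeight G ℓ ⇑φ := by
    have h1 := finsum_mem_range (f := fun φ : τ ↪g G => embWeight G ℓ ⇑φ) hj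
    refine h1.symm.trans (finsum_congr fun φ => ?_)
    by_cases h : ∃ (x : Fin r) (y : Fin k), φ x = Fin.castAdd m y
    · rw [if_pos h, finsum_eq_if, if_neg (by rw [hrange]; exact not_not.2 h)]
    · rw [if_neg h, finsum_eq_if, if_pos ((hrange φ).2 h)]
  rw [hforest, obsMeetSeed, obsG, ← finsum_add_distrib (Set.toFinite _) (Set.toFinite _)]
  refine finsum_congr fun φ => ?_
  split_ifs <;> simp

lemma integral_obsG_sub_obsMeetSeed {α : ℝ} (hα : 0 < α) {k : ℕ} (hk : 3 ≤ k)
    {S : SimpleGraph (Fin k)} (hS : DegreesOfTree S) {r : ℕ} (τ : SimpleGraph (Fin r))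
    (ℓ : Fin r → ℕ) (m : ℕ) :
    ∫ G, obsG τ ℓ G ∂paLaw α S m - ∫ G, obsMeetSeed k m τ ℓ G ∂paLaw α S m =
      ∫ X, obsForest τ ℓ X ∂(paLaw α S m).map (forget k m) := by
  have := isProbabilityMeasure_paLaw hα hk hS m
  rw [integral_map Measurable.of_discrete.aemeasurable .of_discrete,
    ← integral_sub .of_finite .of_finite]
  simp only [obsG_eq_obsMeetSeed_add_obsForest, add_sub_cancel_left]

/-- **Proposition 4.1.** For two seeds `S, S'` of the same size `k ≥ 3`,
every decorated tree `τ` and every `n = k + m ≥ k`, the difference of the expectations of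
`F_τ` equals the difference of the expected contributions of embeddings meeting the seed. -/
theorem difference_only_around_seed (α : ℝ) (hα : 0 < α) (k : ℕ) (hk : 3 ≤ k)
    (S S' : SimpleGraph (Fin k)) (hS : S.IsTree) (hS' : S'.IsTree)
    (r : ℕ) (τ : SimpleGraph (Fin r)) (hτ : τ.IsTree) (ℓ : Fin r → ℕ) (m : ℕ) :
    (∫ G, obsG τ ℓ G ∂paLaw α S m) - (∫ G, obsG τ ℓ G ∂paLaw α S' m) =
      (∫ G, obsMeetSeed k m τ ℓ G ∂paLaw α S m) -
        ∫ G, obsMeetSeed k m τ ℓ G ∂paLaw α S' m := by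
  have h := integral_obsG_sub_obsMeetSeed hα hk (degreesOfTree_of_isTree hk hS) τ ℓ m
  have h' := integral_obsG_sub_obsMeetSeed hα hk (degreesOfTree_of_isTree hk hS') τ ℓ m
  rw [map_forget_paLaw_eq hα hk (degreesOfTree_of_isTree hk hS)
    (degreesOfTree_of_isTree hk hS') m] at h
  linarith

end AffinePA
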